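/- Derivative of the scaling map: for 0 < r < δ and every z ∈ Ω with 0 < d(z) < δ, the map χ_r is differentiable at z with Dχ_r(z) = (r/δ)·ν νᵀ + ((δ - r·d(z)κ)/(δ(1 - d(z)κ)))·(iν)(iν)ᵀ, where ν = ν(p(z)) and κ = κ(p(z)); this matrix is invertible, r·(Dχ_r(z))⁻¹ = δ·ν νᵀ + (rδ(1 - d(z)κ)/(δ - r·d(z)κ))·(iν)(iν)ᵀ, and det Dχ_r(z) = r(δ - r·d(z)κ)/(δ²(1 - d(z)κ)). -/

import Mathlib

/-!
In tubular coordinates `F (t, s) = γ t - s • ν (γ t)` around `Γ`, a point `w` near `z` is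
`F (t w, d w)` where `γ (t w) = p w`. At `(t₀, d z)`, `γ t₀ = p z`, the derivative of `F` is
`(a, b) ↦ a (1 - d κ) • iν - b • ν`, which is invertible because `|d κ| < 1`. The coordinate map
`w ↦ (t w, d w)` is therefore differentiable at `z` as soon as it is continuous there
(`HasFDerivAt.of_local_left_inverse`), so the inverse function theorem is not needed. Continuity
of `t` (`exists_continuousAt_lift`) is a compactness argument: with `t w` taken in a period
interval centred at `t₀`, each cluster point of `t` at `z` parametrises a nearest point of `z`,
hence equals `t₀` by uniqueness of the nearest point and injectivity of `γ` modulo the period.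

It follows that `Dp(z) = (1 - d κ)⁻¹ (iν)(iν)ᵀ`. The formulas for `Dχ_r(z)`, its inverse and its
determinant are then computations with operators diagonal in the orthonormal frame `(ν, iν)`
(`frame_comp`, `frame_det`).
-/

noncomputable def ipr (z w : ℂ) : ℝ := z.re * w.re + z.im * w.im

noncomputable def iprCLM (g : ℂ) : ℂ →L[ℝ] ℝ := g.re • Complex.reCLM + g.im • Complex.imCLM

noncomputable def projCLM (e : ℂ) : ℂ →L[ℝ] ℂ := (iprCLM e).smulRight e

/-! ### Operators diagonal in an orthonormal frame -/

lemma projCLM_apply (e v : ℂ) : projCLM e v = (e.re * v.re + e.im * v.im) • e := by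
  simp [projCLM, iprCLM]

lemma re_sq_add_im_sq_of_norm {e : ℂ} (he : ‖e‖ = 1) : e.re ^ 2 + e.im ^ 2 = 1 := by
  have h := Complex.sq_norm e
  rw [he, Complex.normSq_apply] at h
  linarith

/-- The frame `(e, ie)` is orthonormal, so its two projections add up to the identity. -/
lemma projCLM_add_projCLM_I {e : ℂ} (he : ‖e‖ = 1) (v : ℂ) :
    projCLM e v + projCLM (Complex.I * e) v = v := by
  have h := re_sq_add_im_sq_of_norm he
  simp only [projCLM_apply]
  apply Complex.ext
  · simp
    linear_combination v.re * h
  · simp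
    linear_combination v.im * h

lemma frame_comp {e : ℂ} (he : ‖e‖ = 1) {a b a' b' r : ℝ} (ha : a * a' = r) (hb : b * b' = r) :
    (a • projCLM e + b • projCLM (Complex.I * e)).comp
      (a' • projCLM e + b' • projCLM (Complex.I * e)) = r • ContinuousLinearMap.id ℝ ℂ := by
  have h := re_sq_add_im_sq_of_norm he
  have h1 : ∀ v, projCLM e (projCLM e v) = projCLM e v := fun v => by
    simp only [projCLM_apply]
    congr 1
    simp
    linear_combination (e.re * v.re + e.im * v.im) * h
  have h2 : ∀ v, projCLM (Complex.I * e) (projCLM (Complex.I * e) v)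
      = projCLM (Complex.I * e) v := fun v => by
    simp only [projCLM_apply]
    congr 1
    simp
    linear_combination (-e.im * v.re + e.re * v.im) * h
  have h3 : ∀ v, projCLM e (projCLM (Complex.I * e) v) = 0 := fun v => by
    simp only [projCLM_apply]
    convert zero_smul ℝ e
    simp
    ring
  have h4 : ∀ v, projCLM (Complex.I * e) (projCLM e v) = 0 := fun v => by
    simp only [projCLM_apply]
    convert zero_smul ℝ (Complex.I * e)
    simp
    ring
  ext1 v
  simp only [ContinuousLinearMap.comp_apply, add_apply, smul_apply,
    map_add, map_smul, h1, h2, h3, h4, smul_zero, add_zero, zero_add, smul_smul,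
    ContinuousLinearMap.id_apply, mul_comm a' a, mul_comm b' b, ha, hb]
  rw [← smul_add, projCLM_add_projCLM_I he]

lemma frame_det {e : ℂ} (he : ‖e‖ = 1) (a b : ℝ) :
    LinearMap.det (a • projCLM e + b • projCLM (Complex.I * e) : ℂ →ₗ[ℝ] ℂ)
      = a * b := by
  have h := re_sq_add_im_sq_of_norm he
  rw [← LinearMap.det_toMatrix Complex.basisOneI, Matrix.det_fin_two]
  simp [LinearMap.toMatrix_apply, projCLM_apply]
  linear_combination a * b * (e.re ^ 2 + e.im ^ 2 + 1) * h

/-! ### Tubular coordinates -/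

/-- A closed curve that is injective on one period is injective modulo its period; in particular
two parameters of the same point that are at most half a period apart agree. -/
lemma eq_of_curve_eq {L : ℝ} (hL : 0 < L) {γ : ℝ → ℂ} (hper : Function.Periodic γ L)
    (hinj : Set.InjOn γ (Set.Ico 0 L)) {x y : ℝ} (h : γ x = γ y) (hxy : |x - y| ≤ L / 2) :
    x = y := by
  have hmod : ∀ x, γ (toIcoMod hL 0 x) = γ x := fun x => by
    rw [toIcoMod]
    exact hper.sub_zsmul_eq _
  have hmem : ∀ x, toIcoMod hL 0 x ∈ Set.Ico 0 L := fun x => by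
    simpa using toIcoMod_mem_Ico hL 0 x
  have heq : toIcoMod hL 0 x = toIcoMod hL 0 y :=
    hinj (hmem x) (hmem y) (by rw [hmod, hmod, h])
  obtain ⟨n, hn⟩ := toIcoMod_eq_toIcoMod hL |>.1 heq
  rw [zsmul_eq_mul] at hn
  have hn0 : n = 0 := by
    have h1 : |(n : ℝ)| * L ≤ L / 2 := by
      rw [← abs_of_pos hL, ← abs_mul, ← hn, abs_sub_comm, abs_of_pos hL]
      exact hxy
    have h2 : |(n : ℝ)| < 1 := by nlinarith
    have h3 : |n| < 1 := by exact_mod_cast h2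
    exact Int.abs_lt_one_iff.1 h3
  subst hn0
  simp at hn
  linarith

/-- The parameter of the nearest point can be chosen continuously at `z`: it is taken in the
period interval centred at `t₀`, and the only possible limit of parameters at `z` is `t₀`. -/
lemma exists_continuousAt_lift {L : ℝ} (hL : 0 < L) {γ : ℝ → ℂ} (hcont : Continuous γ)
    (hper : Function.Periodic γ L) (hinj : Set.InjOn γ (Set.Ico 0 L))
    {d : ℂ → ℝ} (hd : Continuous d) {p : ℂ → ℂ} {z : ℂ} {t₀ : ℝ} (ht₀ : γ t₀ = p z)
    (hp : ∀ᶠ w in nhds z, p w ∈ Set.range γ ∧ dist w (p w) = d w)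
    (huniq : ∀ q ∈ Set.range γ, dist z q = d z → q = p z) :
    ∃ t : ℂ → ℝ, t z = t₀ ∧ ContinuousAt t z ∧ ∀ᶠ w in nhds z, γ (t w) = p w := by
  have hex : ∀ w, ∃ s, s ∈ Set.Icc (t₀ - L / 2) (t₀ + L / 2) ∧
      (p w ∈ Set.range γ → γ s = p w) := fun w => by
    by_cases hw : p w ∈ Set.range γ
    · obtain ⟨s, hs⟩ := hw
      obtain ⟨y, hy, hys⟩ := hper.exists_mem_Ico hL s (t₀ - L / 2)
      exact ⟨y, ⟨hy.1, by linarith [hy.2]⟩, fun _ => by rw [← hys, hs]⟩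
    · exact ⟨t₀, ⟨by linarith, by linarith⟩, fun h => absurd h hw⟩
  choose t htm ht using hex
  have habs : ∀ x ∈ Set.Icc (t₀ - L / 2) (t₀ + L / 2), |x - t₀| ≤ L / 2 := fun x hx => by
    rw [abs_le]
    constructor <;> linarith [hx.1, hx.2]
  have htz : t z = t₀ :=
    eq_of_curve_eq hL hper hinj (by rw [ht z hp.self_of_nhds.1, ht₀]) (habs _ (htm z))
  have hev : ∀ᶠ w in nhds z, γ (t w) = p w := hp.mono fun w hw => ht w hw.1
  refine ⟨t, htz, ?_, hev⟩
  rw [ContinuousAt, htz]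
  refine isCompact_Icc.tendsto_nhds_of_unique_mapClusterPt (Filter.Eventually.of_forall htm) ?_
  intro x hx hcl
  obtain ⟨U, hU, hUx⟩ := mapClusterPt_iff_ultrafilter.1 hcl
  have h1 : Filter.Tendsto (fun w => dist w (γ (t w))) U (nhds (dist z (γ x))) :=
    Filter.Tendsto.dist hU ((hcont.tendsto x).comp hUx)
  have h2 : Filter.Tendsto (fun w => dist w (γ (t w))) U (nhds (d z)) := by
    refine ((hd.tendsto z).mono_left hU).congr' ?_
    filter_upwards [hU hp, hU hev] with w hw hw'
    rw [hw', hw.2]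
  have h3 := huniq _ (Set.mem_range_self x) (tendsto_nhds_unique h1 h2)
  exact eq_of_curve_eq hL hper hinj (h3.trans ht₀.symm) (habs x hx)

/-- The invertible derivative `(a, b) ↦ (a c) • ie - b • e` of the tubular coordinates, where `e`
is the unit normal and `c = 1 - d κ`. -/
noncomputable def tubeEquiv (e : ℂ) (he : ‖e‖ = 1) (c : ℝ) (hc : c ≠ 0) : (ℝ × ℝ) ≃L[ℝ] ℂ :=
  ContinuousLinearEquiv.equivOfInverse
    ((ContinuousLinearMap.fst ℝ ℝ ℝ).smulRight (c • (Complex.I * e)) -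
      (ContinuousLinearMap.snd ℝ ℝ ℝ).smulRight e)
    ((c⁻¹ • iprCLM (Complex.I * e)).prod (-iprCLM e))
    (fun x => by
      have h := re_sq_add_im_sq_of_norm he
      apply Prod.ext
      · simp [iprCLM]
        field_simp
        linear_combination c * x.1 * h
      · simp [iprCLM]
        linear_combination x.2 * h)
    (fun v => by
      have h := projCLM_add_projCLM_I he v
      simp only [projCLM, ContinuousLinearMap.smulRight_apply] at h
      simp only [ContinuousLinearMap.prod_apply, sub_apply,
        ContinuousLinearMap.smulRight_apply, ContinuousLinearMap.coe_fst',
        ContinuousLinearMap.coe_snd', smul_apply, neg_apply, smul_smul, smul_eq_mul]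
      rw [show c⁻¹ * (iprCLM (Complex.I * e)) v * c = iprCLM (Complex.I * e) v by field_simp,
        neg_smul, sub_neg_eq_add, add_comm, h])

/-- The nearest-point map has derivative `(1 - d κ)⁻¹ (ie)(ie)ᵀ`. Here `n` is the normal along the
curve, `k` its curvature at `t₀` and `w = γ (t w) - d w • n (t w)` expresses that `w` has tubular
coordinates `(t w, d w)`. -/
lemma hasFDerivAt_nearest {γ n : ℝ → ℂ} {t d : ℂ → ℝ} {p : ℂ → ℂ} {z e : ℂ} {k : ℝ}
    (he : ‖e‖ = 1) (hn : n (t z) = e) (hγ' : HasDerivAt γ (Complex.I * e) (t z))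
    (hn' : HasDerivAt n (k • (Complex.I * e)) (t z)) (hc : 1 - d z * k ≠ 0)
    (ht : ContinuousAt t z) (hd : ContinuousAt d z)
    (hp : ∀ᶠ w in nhds z, γ (t w) = p w)
    (hw : ∀ᶠ w in nhds z, γ (t w) - d w • n (t w) = w) :
    HasFDerivAt p ((1 - d z * k)⁻¹ • projCLM (Complex.I * e)) z := by
  have hF : HasFDerivAt (fun x : ℝ × ℝ => γ x.1 - x.2 • n x.1)
      (tubeEquiv e he (1 - d z * k) hc : (ℝ × ℝ) →L[ℝ] ℂ) (t z, d z) := by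
    have h1 : HasFDerivAt (fun x : ℝ × ℝ => γ x.1) _ (t z, d z) :=
      HasFDerivAt.comp (t z, d z) (f := Prod.fst) hγ'.hasFDerivAt hasFDerivAt_fst
    have h2 : HasFDerivAt (fun x : ℝ × ℝ => n x.1) _ (t z, d z) :=
      HasFDerivAt.comp (t z, d z) (f := Prod.fst) hn'.hasFDerivAt hasFDerivAt_fst
    have h3 : HasFDerivAt (𝕜 := ℝ) (fun x : ℝ × ℝ => x.2) _ (t z, d z) := hasFDerivAt_snd
    refine (h1.sub (h3.smul h2)).congr_fderiv ?_
    apply ContinuousLinearMap.ext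
    intro x
    simp [tubeEquiv, hn]
    ring
  have hG : HasFDerivAt (fun w => (t w, d w)) _ z :=
    HasFDerivAt.of_local_left_inverse (ht.prodMk hd) hF hw
  have hT : HasFDerivAt (fun w => γ (t w)) _ z :=
    HasFDerivAt.comp z (f := t) hγ'.hasFDerivAt hG.fst
  refine (hT.congr_of_eventuallyEq (hp.mono fun w h => h.symm)).congr_fderiv ?_
  apply ContinuousLinearMap.ext
  intro v
  simp [tubeEquiv, projCLM]
  ring


/-- Derivative of the scaling map `χ_r(z) = (r/δ)z + (1-r/δ)p(z)`,
its inverse (in the form `Dχ_r(z) ∘ E = r·id = E ∘ Dχ_r(z)` with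
`E = δ ννᵀ + (rδ(1-dκ)/(δ-rdκ)) (iν)(iν)ᵀ`, i.e. `E = r (Dχ_r(z))⁻¹`) and its determinant. -/
theorem derivative_of_scaling_map
    (L : ℝ) (hL : 0 < L) (γ : ℝ → ℂ)
    (hγC : ContDiff ℝ 3 γ) (hγper : Function.Periodic γ L)
    (hγunit : ∀ t, ‖deriv γ t‖ = 1) (hγinj : Set.InjOn γ (Set.Ico 0 L))
    (Γset : Set ℂ) (hΓ : Γset = Set.range γ)
    (ν : ℂ → ℂ) (hν : ∀ t, ν (γ t) = -Complex.I * deriv γ t)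
    (κ : ℂ → ℝ) (hκ : ∀ t, deriv (fun s => ν (γ s)) t = (κ (γ t) : ℂ) * deriv γ t)
    (Ω : Set ℂ) (hΩopen : IsOpen Ω) (hΩconn : IsConnected Ω)
    (hΓfr : Γset ⊆ frontier Ω)
    (hΓcomp : ∀ q ∈ Γset, connectedComponentIn (frontier Ω) q = Γset)
    (d : ℂ → ℝ) (hd : ∀ z, d z = Metric.infDist z Γset)
    (δ : ℝ) (hδ : 0 < δ) (hκδ : ∀ q ∈ Γset, |κ q| < 1/δ)
    (p : ℂ → ℂ)
    (hp : ∀ z ∈ Ω, d z ≤ δ →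
      p z ∈ Γset ∧ dist z (p z) = d z ∧ ∀ q ∈ Γset, dist z q = d z → q = p z)
    (hin : ∀ z ∈ Ω, d z ≤ δ → z = p z - (d z : ℝ) • ν (p z)) :
    ∀ r, 0 < r → r < δ → ∀ z ∈ Ω, 0 < d z → d z < δ →
      -- Dχ_r(z) = (r/δ) ννᵀ + ((δ - r d κ)/(δ(1 - d κ))) (iν)(iν)ᵀ
      HasFDerivAt (fun w => (r/δ) • w + (1 - r/δ) • p w)
        ((r/δ) • projCLM (ν (p z)) +
          ((δ - r * d z * κ (p z)) / (δ * (1 - d z * κ (p z)))) •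
            projCLM (Complex.I * ν (p z))) z ∧
      -- invertibility and the formula r·(Dχ_r(z))⁻¹ = δ ννᵀ + (rδ(1-dκ)/(δ-rdκ)) (iν)(iν)ᵀ
      (((r/δ) • projCLM (ν (p z)) +
          ((δ - r * d z * κ (p z)) / (δ * (1 - d z * κ (p z)))) •
            projCLM (Complex.I * ν (p z))).comp
        (δ • projCLM (ν (p z)) +
          ((r * δ * (1 - d z * κ (p z))) / (δ - r * d z * κ (p z))) •
            projCLM (Complex.I * ν (p z)))
        = r • ContinuousLinearMap.id ℝ ℂ) ∧
      ((δ • projCLM (ν (p z)) +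
          ((r * δ * (1 - d z * κ (p z))) / (δ - r * d z * κ (p z))) •
            projCLM (Complex.I * ν (p z))).comp
        ((r/δ) • projCLM (ν (p z)) +
          ((δ - r * d z * κ (p z)) / (δ * (1 - d z * κ (p z)))) •
            projCLM (Complex.I * ν (p z)))
        = r • ContinuousLinearMap.id ℝ ℂ) ∧
      -- det Dχ_r(z) = r(δ - r d κ)/(δ²(1 - d κ))
      LinearMap.det
        (((r/δ) • projCLM (ν (p z)) +
          ((δ - r * d z * κ (p z)) / (δ * (1 - d z * κ (p z)))) •
            projCLM (Complex.I * ν (p z))) : ℂ →ₗ[ℝ] ℂ)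
        = r * (δ - r * d z * κ (p z)) / (δ^2 * (1 - d z * κ (p z))) := by
  intro r hr hrδ z hz hdz hdzδ
  have hdcont : Continuous d := by
    rw [show d = fun z => Metric.infDist z Γset from funext hd]
    exact Metric.continuous_infDist_pt Γset
  subst hΓ
  have hpz := hp z hz hdzδ.le
  obtain ⟨t₀, ht₀⟩ := hpz.1
  have hγd : Differentiable ℝ γ := hγC.differentiable (by norm_num)
  have hγ'd : Differentiable ℝ (deriv γ) :=
    ((contDiff_succ_iff_deriv (n := 2)).1 hγC).2.2.differentiable (by norm_num)
  have hνd : Differentiable ℝ (fun s => ν (γ s)) := by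
    simp only [hν]
    exact hγ'd.const_mul _
  have hνI : ∀ t, deriv γ t = Complex.I * ν (γ t) := fun t => by
    rw [hν, ← mul_assoc]
    simp
  have he : ‖ν (p z)‖ = 1 := by
    rw [← ht₀, hν]
    simp [hγunit]
  have hκz : |κ (p z)| < 1 / δ := hκδ _ hpz.1
  rw [lt_div_iff₀ hδ] at hκz
  have hbd := abs_lt.1 (show |d z * κ (p z)| < 1 by
    rw [abs_mul, abs_of_pos hdz]
    nlinarith [abs_nonneg (κ (p z))])
  have hc : 1 - d z * κ (p z) ≠ 0 := by linarith [hbd.2]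
  have hc' : δ - r * d z * κ (p z) ≠ 0 := by nlinarith [hbd.2]
  have hnear : ∀ᶠ w in nhds z, w ∈ Ω ∧ d w ≤ δ :=
    (hΩopen.eventually_mem hz).and ((hdcont.tendsto z).eventually (Iic_mem_nhds hdzδ))
  obtain ⟨t, htz, htc, hpt⟩ := exists_continuousAt_lift hL hγC.continuous hγper hγinj hdcont ht₀
    (hnear.mono fun w hw => ⟨(hp w hw.1 hw.2).1, (hp w hw.1 hw.2).2.1⟩) hpz.2.2
  have hγtz : γ (t z) = p z := by rw [htz, ht₀]
  have hDp : HasFDerivAt p ((1 - d z * κ (p z))⁻¹ • projCLM (Complex.I * ν (p z))) z := by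
    refine hasFDerivAt_nearest (γ := γ) (n := fun s => ν (γ s)) he (by rw [hγtz]) ?_ ?_ hc htc
      hdcont.continuousAt hpt ?_
    · rw [← hγtz, ← hνI]
      exact (hγd _).hasDerivAt
    · have h := (hνd (t z)).hasDerivAt
      rwa [hκ, hνI, hγtz, ← Complex.real_smul] at h
    · filter_upwards [hnear, hpt] with w hw hw'
      simp only [hw']
      exact (hin w hw.1 hw.2).symm
  refine ⟨?_, frame_comp he ?_ ?_, frame_comp he ?_ ?_, ?_⟩
  · refine (((hasFDerivAt_id z).const_smul (r / δ)).add
      (hDp.const_smul (1 - r / δ))).congr_fderiv ?_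
    apply ContinuousLinearMap.ext
    intro v
    have hcoef : (δ - r * d z * κ (p z)) / (δ * (1 - d z * κ (p z)))
        = r / δ + (1 - r / δ) * (1 - d z * κ (p z))⁻¹ := by
      field_simp
      ring
    rw [hcoef]
    simp only [add_apply, smul_apply, ContinuousLinearMap.id_apply, smul_smul]
    nth_rewrite 1 [← projCLM_add_projCLM_I he v]
    module
  · field_simp
  · field_simp
  · field_simp
  · field_simp
  · rw [frame_det he]
    field_simp
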